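/- For every integer n ≠ 0, the iterated integral 2π · ∫₀^∞ r·e^{−r²} · ( ∫₀^∞ e^{−r²·cosh(t)} · [ (2n−1)/(t² + (2n−1)²π²) − (2n+1)/(t² + (2n+1)²π²) ] dt ) dr equals 1/(2π·n²). -/

import Mathlib

open Real MeasureTheory

lemma aux_sig (t : ℝ) : Real.sigmoid t * (1 - Real.sigmoid t) = 1 / 2 * (1 / (1 + Real.cosh t)) := by
  rw [Real.sigmoid_def, Real.cosh_eq, Real.exp_neg]
  have := Real.exp_pos t
  field_simp
  ring

lemma aux_beta (s : ℝ) (hs : s ≠ 0) :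
    Complex.betaIntegral (1 + s * Complex.I) (1 - s * Complex.I)
      = ((π * s / Real.sinh (π * s) : ℝ) : ℂ) := by
  have h := Complex.Gamma_mul_Gamma_eq_betaIntegral (s := 1 + s * Complex.I)
    (t := 1 - s * Complex.I) (by simp) (by simp)
  have hz : (s * Complex.I : ℂ) ≠ 0 := by simp [hs]
  have h2 : Complex.Gamma ((1 + s * Complex.I) + (1 - s * Complex.I)) = 1 := by
    have : ((1 + s * Complex.I) + (1 - s * Complex.I) : ℂ) = 2 := by ring
    rw [this]
    simpa [one_add_one_eq_two] using Complex.Gamma_nat_eq_factorial 1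
  rw [h2, one_mul, add_comm 1 (s * Complex.I), Complex.Gamma_add_one _ hz, mul_assoc,
    Complex.Gamma_mul_Gamma_one_sub, ← mul_assoc, Complex.sin_mul_I, add_comm (s * Complex.I) 1] at h
  rw [← h]
  push_cast
  have hI := Complex.I_ne_zero
  have hsh : Complex.sinh (π * s) ≠ 0 := by
    rw [← Complex.ofReal_mul, ← Complex.ofReal_sinh, Complex.ofReal_ne_zero]
    simp [Real.sinh_eq_zero, hs, Real.pi_ne_zero]
  field_simp

lemma aux_cos (s : ℝ) (hs : s ≠ 0) :
    ∫ t in Set.Ioi (0 : ℝ), 1 / (1 + Real.cosh t) * Real.cos (t * s)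
      = π * s / Real.sinh (π * s) := by
  set G : ℝ → ℂ := fun x => (x : ℂ) ^ ((1 + s * Complex.I) - 1) * (1 - (x : ℂ)) ^ ((1 - s * Complex.I) - 1) with hG
  have hint : IntervalIntegrable G volume 0 1 :=
    Complex.betaIntegral_convergent (by simp) (by simp)
  have hB : ∫ x in (0:ℝ)..1, G x = ((π * s / Real.sinh (π * s) : ℝ) : ℂ) := aux_beta s hs
  rw [intervalIntegrable_iff_integrableOn_Ioo_of_le zero_le_one] at hint
  rw [intervalIntegral.integral_of_le zero_le_one, integral_Ioc_eq_integral_Ioo] at hB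
  have hR : ∫ x in Set.Ioo (0:ℝ) 1, (G x).re = π * s / Real.sinh (π * s) := by
    have := integral_re hint
    simp only [RCLike.re_to_complex] at this
    rw [this, hB, Complex.ofReal_re]
  have hcv := integral_image_eq_integral_abs_deriv_smul (s := Set.univ) (f := Real.sigmoid)
    (f' := fun x => Real.sigmoid x * (1 - Real.sigmoid x)) MeasurableSet.univ
    (fun x _ => (Real.hasDerivAt_sigmoid x).hasDerivWithinAt)
    Real.sigmoid_injective.injOn (fun x => (G x).re)
  rw [Set.image_univ, Real.range_sigmoid, hR, Measure.restrict_univ] at hcv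
  rw [hcv]
  have h3 : ∀ t : ℝ, |Real.sigmoid t * (1 - Real.sigmoid t)| • (G (Real.sigmoid t)).re
      = 1 / 2 * (fun t => 1 / (1 + Real.cosh t) * Real.cos (t * s)) |t| := by
    intro t
    have p1 := Real.sigmoid_pos t
    have p2 : 0 < 1 - Real.sigmoid t := by linarith [Real.sigmoid_lt_one t]
    rw [abs_of_pos (mul_pos p1 p2), aux_sig]
    have hc : Real.cos (|t| * s) = Real.cos (t * s) := by
      rcases abs_choice t with h | h <;> rw [h]
      rw [neg_mul, Real.cos_neg]
    simp only [Real.cosh_abs, hc, smul_eq_mul]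
    have hlog : Real.log (Real.sigmoid t) - Real.log (1 - Real.sigmoid t) = t := by
      rw [← Real.sigmoid_neg, ← Real.sigmoid_mul_rexp_neg,
        Real.log_mul p1.ne' (Real.exp_pos _).ne', Real.log_exp]
      ring
    have : G (Real.sigmoid t) = Complex.exp ((t * s : ℝ) * Complex.I) := by
      simp only [hG]
      have e : (1 - (Real.sigmoid t : ℂ)) = ((1 - Real.sigmoid t : ℝ) : ℂ) := by push_cast; rfl
      rw [e, Complex.cpow_def_of_ne_zero (by exact_mod_cast p1.ne'),
        Complex.cpow_def_of_ne_zero (by exact_mod_cast p2.ne'), ← Complex.ofReal_log p1.le,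
        ← Complex.ofReal_log p2.le, ← Complex.exp_add]
      congr 1
      conv_rhs => rw [← hlog]
      push_cast
      ring
    rw [this, Complex.exp_ofReal_mul_I_re]
    ring
  simp_rw [h3]
  rw [integral_const_mul, integral_comp_abs (f := fun t => 1 / (1 + Real.cosh t) * Real.cos (t * s))]
  ring

lemma aux_laplace (a t : ℝ) (ha : 0 < a) :
    ∫ s in Set.Ioi (0 : ℝ), Real.exp (-(a * π) * s) * Real.cos (t * s)
      = π * (a / (t ^ 2 + a ^ 2 * π ^ 2)) := by
  have hap : 0 < a * π := mul_pos ha Real.pi_pos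
  set c : ℂ := -((a * π : ℝ) : ℂ) + t * Complex.I with hc
  have hcr : c.re < 0 := by simp [hc]; positivity
  have h1 := integrableOn_exp_mul_complex_Ioi hcr 0
  have h2 := integral_exp_mul_complex_Ioi hcr 0
  have h3 := integral_re h1
  simp only [RCLike.re_to_complex] at h3
  rw [h2] at h3
  have h4 : ∀ s : ℝ, (Complex.exp (c * s)).re = Real.exp (-(a * π) * s) * Real.cos (t * s) := by
    intro s
    rw [Complex.exp_re]
    simp [hc]
  simp_rw [h4] at h3
  rw [h3]
  have : t ^ 2 + a ^ 2 * π ^ 2 ≠ 0 := by positivity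
  simp [hc, Complex.div_re, Complex.normSq_apply]
  field_simp
  ring

lemma aux_int_exp (a : ℝ) (ha : 0 < a) :
    IntegrableOn (fun s => Real.exp (-(a * π) * s)) (Set.Ioi 0) :=
  integrableOn_exp_mul_Ioi (by have := mul_pos ha Real.pi_pos; linarith) 0

lemma aux_int_w : IntegrableOn (fun t => 1 / (1 + Real.cosh t)) (Set.Ioi 0) := by
  have h := (integrableOn_exp_mul_Ioi (a := -1) (by norm_num) 0).const_mul 2
  refine Integrable.mono' h ?_ ?_
  · refine Continuous.aestronglyMeasurable ?_
    refine continuous_const.div (by fun_prop) fun t => ?_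
    have := Real.cosh_pos t
    positivity
  · refine Filter.Eventually.of_forall fun t => ?_
    have := Real.cosh_pos t
    rw [Real.norm_of_nonneg (by positivity), div_le_iff₀ (by positivity), Real.cosh_eq, neg_one_mul]
    have e : Real.exp (-t) * Real.exp t = 1 := by rw [← Real.exp_add]; simp
    nlinarith [Real.exp_pos (-t)]

/-- the bracket -/
noncomputable def brk (n t : ℝ) : ℝ := (2 * n - 1) / (t ^ 2 + (2 * n - 1) ^ 2 * π ^ 2)
            - (2 * n + 1) / (t ^ 2 + (2 * n + 1) ^ 2 * π ^ 2)

lemma aux_main (n : ℝ) (hn : 1 ≤ n) :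
    ∫ t in Set.Ioi (0 : ℝ), 1 / (1 + Real.cosh t) * brk n t = 1 / (2 * π ^ 2 * n ^ 2) := by
  have ha : 0 < 2 * n - 1 := by linarith
  have hb : 0 < 2 * n + 1 := by linarith
  set K : ℝ → ℝ := fun s => Real.exp (-((2 * n - 1) * π) * s) - Real.exp (-((2 * n + 1) * π) * s) with hK
  have hKi : IntegrableOn K (Set.Ioi 0) := (aux_int_exp _ ha).sub (aux_int_exp _ hb)
  have cosi : ∀ (f : ℝ → ℝ) (t : ℝ), IntegrableOn f (Set.Ioi 0) →
      IntegrableOn (fun s => f s * Real.cos (t * s)) (Set.Ioi 0) := by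
    intro f t hf
    exact hf.mul_bdd (c := 1) (by fun_prop)
      (Filter.Eventually.of_forall fun s => Real.abs_cos_le_one _)
  have h1 : ∀ t, brk n t = 1 / π * ∫ s in Set.Ioi (0 : ℝ), K s * Real.cos (t * s) := by
    intro t
    have hs : ∀ s, K s * Real.cos (t * s) = Real.exp (-((2 * n - 1) * π) * s) * Real.cos (t * s)
        - Real.exp (-((2 * n + 1) * π) * s) * Real.cos (t * s) := fun s => sub_mul _ _ _
    simp_rw [hs]
    rw [integral_sub (cosi _ t (aux_int_exp _ ha)) (cosi _ t (aux_int_exp _ hb)),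
      aux_laplace _ _ ha, aux_laplace _ _ hb, brk]
    have := Real.pi_ne_zero
    rw [← mul_sub, ← mul_assoc, one_div_mul_cancel this, one_mul]
  have h2 : ∀ t, 1 / (1 + Real.cosh t) * brk n t
      = 1 / π * ∫ s in Set.Ioi (0 : ℝ), 1 / (1 + Real.cosh t) * K s * Real.cos (t * s) := by
    intro t
    simp_rw [h1, mul_assoc (1 / (1 + Real.cosh t))]
    rw [integral_const_mul]
    ring
  simp_rw [h2]
  rw [integral_const_mul, integral_integral_swap]
  · have h3 : ∀ s ∈ Set.Ioi (0:ℝ),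
        ∫ t in Set.Ioi (0 : ℝ), 1 / (1 + Real.cosh t) * K s * Real.cos (t * s)
        = 2 * π * (s ^ ((2:ℝ) - 1) * Real.exp (-((2 * n * π) * s))) := by
      intro s hs
      have hs' : (0:ℝ) < s := hs
      have : ∀ t, 1 / (1 + Real.cosh t) * K s * Real.cos (t * s)
        = K s * (1 / (1 + Real.cosh t) * Real.cos (t * s)) := fun t => by ring
      simp_rw [this]
      rw [integral_const_mul, aux_cos s hs'.ne']
      have hsh : Real.sinh (π * s) ≠ 0 := by
        simp [Real.sinh_eq_zero, hs'.ne', Real.pi_ne_zero]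
      have hKs : K s = 2 * Real.exp (-((2 * n * π) * s)) * Real.sinh (π * s) := by
        simp only [hK, Real.sinh_eq]
        have e1 : -((2 * n - 1) * π) * s = -((2 * n * π) * s) + π * s := by ring
        have e2 : -((2 * n + 1) * π) * s = -((2 * n * π) * s) + -(π * s) := by ring
        rw [e1, e2, Real.exp_add, Real.exp_add]
        ring
      rw [hKs]
      have : s ^ ((2:ℝ) - 1) = s := by norm_num
      rw [this]
      field_simp
    rw [setIntegral_congr_fun measurableSet_Ioi h3, integral_const_mul,
      Real.integral_rpow_mul_exp_neg_mul_Ioi (by norm_num) (by positivity)]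
    have : Real.Gamma 2 = 1 := Real.Gamma_two
    rw [this]
    have := Real.pi_pos
    rw [show ((1 / (2 * n * π)) ^ (2:ℝ) : ℝ) = (1 / (2 * n * π)) ^ (2:ℕ) from by norm_cast]
    field_simp
    try norm_num
  · have := aux_int_w.mul_prod hKi
    exact this.mul_bdd (c := 1) (by fun_prop)
      (Filter.Eventually.of_forall fun s => Real.abs_cos_le_one _)

lemma aux_gauss (b : ℝ) (hb : 0 < b) :
    ∫ r in Set.Ioi (0:ℝ), r * Real.exp (-b * r ^ 2) = (2 * b)⁻¹ := by
  have := integral_mul_cexp_neg_mul_sq (b := (b : ℂ)) (by simpa using hb)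
  rw [← Complex.ofReal_inj, ← integral_complex_ofReal]
  push_cast
  exact this

lemma brk_cont (n : ℝ) (hn : 1 ≤ n) : Continuous (brk n) := by
  have := Real.pi_pos
  have ha : 0 < 2 * n - 1 := by linarith
  have hb : 0 < 2 * n + 1 := by linarith
  unfold brk
  refine Continuous.sub ?_ ?_ <;> refine continuous_const.div (by fun_prop) fun t => ?_ <;> positivity

lemma brk_bdd (n : ℝ) (hn : 1 ≤ n) : ∃ C, ∀ t, ‖brk n t‖ ≤ C := by
  have := Real.pi_pos
  have ha : 0 < 2 * n - 1 := by linarith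
  have hb : 0 < 2 * n + 1 := by linarith
  refine ⟨(2 * n - 1) / ((2 * n - 1) ^ 2 * π ^ 2) + (2 * n + 1) / ((2 * n + 1) ^ 2 * π ^ 2), fun t => ?_⟩
  unfold brk
  refine (norm_sub_le _ _).trans (add_le_add ?_ ?_)
  all_goals
    rw [Real.norm_of_nonneg (by positivity)]
    gcongr
    nlinarith [sq_nonneg t]

lemma aux_total (n : ℝ) (hn : 1 ≤ n) :
    2 * π * ∫ r in Set.Ioi (0 : ℝ), r * Real.exp (-r ^ 2) *
        ∫ t in Set.Ioi (0 : ℝ), Real.exp (-r ^ 2 * Real.cosh t) * brk n t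
      = 1 / (2 * π * n ^ 2) := by
  have hpos : ∀ t : ℝ, 0 < 1 + Real.cosh t := fun t => by have := Real.cosh_pos t; positivity
  have e : ∀ r t : ℝ, r * Real.exp (-r ^ 2) * (Real.exp (-r ^ 2 * Real.cosh t) * brk n t)
      = r * Real.exp (-(1 + Real.cosh t) * r ^ 2) * brk n t := by
    intro r t
    have : -(1 + Real.cosh t) * r ^ 2 = -r ^ 2 + -r ^ 2 * Real.cosh t := by ring
    rw [this, Real.exp_add]; ring
  suffices h : ∫ r in Set.Ioi (0 : ℝ), r * Real.exp (-r ^ 2) *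
        ∫ t in Set.Ioi (0 : ℝ), Real.exp (-r ^ 2 * Real.cosh t) * brk n t
      = 1 / 2 * (1 / (2 * π ^ 2 * n ^ 2)) by
    rw [h]
    have := Real.pi_pos
    field_simp
  simp_rw [← integral_const_mul, e]
  have hc := brk_cont n hn
  obtain ⟨C, hC⟩ := brk_bdd n hn
  rw [integral_integral_swap]
  · simp_rw [integral_mul_const, fun t => aux_gauss _ (hpos t)]
    have : ∀ t : ℝ, (2 * (1 + Real.cosh t))⁻¹ * brk n t = 1 / 2 * (1 / (1 + Real.cosh t) * brk n t) := by
      intro t; have := (hpos t).ne'; field_simp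
    simp_rw [this]
    rw [integral_const_mul, aux_main n hn]
  · have hbase : Integrable (fun p : ℝ × ℝ => p.1 * Real.exp (-(1 + Real.cosh p.2) * p.1 ^ 2))
        ((volume.restrict (Set.Ioi 0)).prod (volume.restrict (Set.Ioi 0))) := by
      rw [integrable_prod_iff' (Continuous.aestronglyMeasurable (by fun_prop))]
      refine ⟨Filter.Eventually.of_forall fun t =>
        (integrable_mul_exp_neg_mul_sq (hpos t)).integrableOn, ?_⟩
      have : ∀ t : ℝ, ∫ r in Set.Ioi (0:ℝ), ‖r * Real.exp (-(1 + Real.cosh t) * r ^ 2)‖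
          = 1 / 2 * (1 / (1 + Real.cosh t)) := by
        intro t
        have h : ∀ r ∈ Set.Ioi (0:ℝ), ‖r * Real.exp (-(1 + Real.cosh t) * r ^ 2)‖
            = r * Real.exp (-(1 + Real.cosh t) * r ^ 2) := by
          intro r hr
          have : (0:ℝ) < r := hr
          exact Real.norm_of_nonneg (by positivity)
        rw [setIntegral_congr_fun measurableSet_Ioi h, aux_gauss _ (hpos t)]
        have := (hpos t).ne'
        field_simp
      simp_rw [this]
      exact aux_int_w.const_mul _
    exact hbase.mul_bdd (c := C) (by fun_prop) (Filter.Eventually.of_forall fun p => hC _)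

lemma brk_neg (n t : ℝ) : brk (-n) t = brk n t := by
  unfold brk
  have h1 : 2 * (-n) - 1 = -(2 * n + 1) := by ring
  have h2 : 2 * (-n) + 1 = -(2 * n - 1) := by ring
  rw [h1, h2, neg_sq, neg_sq, neg_div, neg_div]
  ring


/-- For every integer `n ≠ 0`, the iterated integral (in polar coordinates, from
Yor's formula for the law of the index of a planar Brownian loop)
`2π ∫₀^∞ r e^{-r²} ( ∫₀^∞ e^{-r² cosh t} [ (2n-1)/(t² + (2n-1)²π²) - (2n+1)/(t² + (2n+1)²π²) ] dt ) dr`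
equals `1/(2π n²)`. -/
theorem iterated_integral_winding_area (n : ℤ) (hn : n ≠ 0) :
    2 * π * ∫ r in Set.Ioi (0 : ℝ), r * Real.exp (-r ^ 2) *
        ∫ t in Set.Ioi (0 : ℝ), Real.exp (-r ^ 2 * Real.cosh t) *
          ((2 * (n : ℝ) - 1) / (t ^ 2 + (2 * (n : ℝ) - 1) ^ 2 * π ^ 2)
            - (2 * (n : ℝ) + 1) / (t ^ 2 + (2 * (n : ℝ) + 1) ^ 2 * π ^ 2))
      = 1 / (2 * π * (n : ℝ) ^ 2) := by

  change 2 * π * ∫ r in Set.Ioi (0 : ℝ), r * Real.exp (-r ^ 2) *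
        ∫ t in Set.Ioi (0 : ℝ), Real.exp (-r ^ 2 * Real.cosh t) * brk n t = _
  rcases lt_or_gt_of_ne hn with h | h
  · have h1 : (1:ℝ) ≤ -(n:ℝ) := by
      have : (1:ℤ) ≤ -n := by omega
      exact_mod_cast this
    have := aux_total _ h1
    simp_rw [brk_neg, neg_sq] at this
    exact this
  · exact aux_total _ (by exact_mod_cast h)
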